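/- For the m×n grid graph G_{m,n} = P_m □ P_n with 4 ≤ m ≤ n, srd(G_{m,n}) = 4. -/

import Mathlib

open SimpleGraph

/-- `F` is an edge-cut of `G` separating `u` and `v`. -/
def CutsBetween {V : Type*} (G : SimpleGraph V) (u v : V) (F : Finset (Sym2 V)) : Prop :=
  ↑F ⊆ G.edgeSet ∧ ¬ (G.deleteEdges ↑F).Reachable u v

/-- `lam G u v` is the minimum number of edges in an edge-cut of `G` separating `u` and `v`. -/
noncomputable def lam {V : Type*} (G : SimpleGraph V) (u v : V) : ℕ :=
  sInf {n | ∃ F : Finset (Sym2 V), CutsBetween G u v F ∧ F.card = n}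

/-- `c` is a strong rainbow disconnection coloring of `G`: every pair of distinct vertices
admits a rainbow minimum edge-cut separating them. -/
def IsSRDColoring {V : Type*} (G : SimpleGraph V) (c : Sym2 V → ℕ) : Prop :=
  ∀ u v : V, u ≠ v → ∃ F : Finset (Sym2 V),
    CutsBetween G u v F ∧ F.card = lam G u v ∧ Set.InjOn c ↑F

/-- The strong rainbow disconnection number of `G`. -/
noncomputable def srd {V : Type*} (G : SimpleGraph V) : ℕ :=
  sInf {k | ∃ c : Sym2 V → ℕ, (∀ e ∈ G.edgeSet, c e < k) ∧ IsSRDColoring G c}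

/-- In a box product, a fibre `{a} × β` with no edge in `F` stays connected after deleting `F`. -/
lemma reachable_fiber_left {α β : Type*} {G : SimpleGraph α} {H : SimpleGraph β}
    (hH : H.Preconnected) {F : Finset (Sym2 (α × β))} {a : α}
    (ha : ∀ e ∈ F, e.map Prod.fst ≠ s(a, a)) (b b' : β) :
    ((G □ H).deleteEdges ↑F).Reachable (a, b) (a, b') := by
  let f : H →g (G □ H).deleteEdges ↑F :=
    { toFun := fun y => (a, y)
      map_rel' := by
        intro y y' h
        rw [deleteEdges_adj]
        exact ⟨by simp [boxProd_adj, h], fun hF => ha _ hF (by simp)⟩ }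
  exact (hH b b').map f

/-- In a box product, a fibre `α × {b}` with no edge in `F` stays connected after deleting `F`. -/
lemma reachable_fiber_right {α β : Type*} {G : SimpleGraph α} {H : SimpleGraph β}
    (hG : G.Preconnected) {F : Finset (Sym2 (α × β))} {b : β}
    (hb : ∀ e ∈ F, e.map Prod.snd ≠ s(b, b)) (a a' : α) :
    ((G □ H).deleteEdges ↑F).Reachable (a, b) (a', b) := by
  let f : G →g (G □ H).deleteEdges ↑F :=
    { toFun := fun x => (x, b)
      map_rel' := by
        intro x x' h
        rw [deleteEdges_adj]
        exact ⟨by simp [boxProd_adj, h], fun hF => hb _ hF (by simp)⟩ }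
  exact (hG a a').map f

/-- Fewer than `card γ` edges leave some fibre of `p : V → γ` free of edges. -/
lemma exists_fiber_disjoint {V γ : Type*} [Fintype γ] (p : V → γ) (F : Finset (Sym2 V))
    (hF : F.card < Fintype.card γ) : ∃ a, ∀ e ∈ F, e.map p ≠ s(a, a) := by
  by_contra! h
  choose f hf hfa using h
  refine hF.not_ge (Finset.card_le_card_of_injOn f (fun a _ => hf a) ?_)
  intro a _ a' _ h
  have := hfa a
  rw [h, hfa a'] at this
  simpa using this.symm

/-- Deleting fewer edges than the degree of `w` leaves `w` connected to the crossing point of two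
untouched fibres. -/
lemma reachable_of_card_lt {α β : Type*} {G : SimpleGraph α} {H : SimpleGraph β}
    (hG : G.Preconnected) (hH : H.Preconnected) {F : Finset (Sym2 (α × β))}
    (hF : ↑F ⊆ (G □ H).edgeSet) {a₀ : α} (ha : ∀ e ∈ F, e.map Prod.fst ≠ s(a₀, a₀))
    {b₀ : β} (hb : ∀ e ∈ F, e.map Prod.snd ≠ s(b₀, b₀)) {w : α × β} {N : Finset (α × β)}
    (hN : ∀ x ∈ N, (G □ H).Adj w x) (hcard : F.card < N.card) :
    ((G □ H).deleteEdges ↑F).Reachable w (a₀, b₀) := by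
  by_contra h
  let P : α × β → Sym2 (α × β) → Prop := fun x e => e = s(w, x) ∨
    (x.2 = w.2 ∧ e.map Prod.fst = s(x.1, x.1)) ∨ (x.1 = w.1 ∧ e.map Prod.snd = s(x.2, x.2))
  have key : ∀ x ∈ N, ∃ e ∈ F, P x e := by
    intro x hx
    by_contra! hx'
    have hwx : ((G □ H).deleteEdges ↑F).Adj w x := by
      rw [deleteEdges_adj]
      exact ⟨hN x hx, fun hm => hx' _ hm (Or.inl rfl)⟩
    refine h (hwx.reachable.trans ?_)
    have hadj := hN x hx
    rw [boxProd_adj] at hadj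
    rcases hadj with ⟨-, h2⟩ | ⟨-, h1⟩
    · exact (reachable_fiber_left hH (fun e he h' => hx' e he (Or.inr (Or.inl ⟨h2.symm, h'⟩)))
        x.2 b₀).trans (reachable_fiber_right hG hb x.1 a₀)
    · exact (reachable_fiber_right hG (fun e he h' => hx' e he (Or.inr (Or.inr ⟨h1.symm, h'⟩)))
        x.1 a₀).trans (reachable_fiber_left hH ha x.2 b₀)
  have : Nonempty (Sym2 (α × β)) := ⟨s(w, w)⟩
  choose! f hfF hfP using key
  refine hcard.not_ge (Finset.card_le_card_of_injOn f hfF ?_)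
  intro x hx y hy hxy
  have hex := hF (hfF x hx)
  have hPx := hfP x hx
  have hPy := hfP y hy
  have hax := hN x hx
  have hay := hN y hy
  rw [← hxy] at hPy
  generalize f x = e at hex hPx hPy
  obtain ⟨w1, w2⟩ := w
  obtain ⟨x1, x2⟩ := x
  obtain ⟨y1, y2⟩ := y
  induction e with
  | h p q =>
    obtain ⟨p1, p2⟩ := p
    obtain ⟨q1, q2⟩ := q
    have hpq := hex
    simp only [mem_edgeSet] at hpq
    have h1 := hpq.ne
    have h2 := hax.ne
    have h3 := hay.ne
    simp only [P, Sym2.map_mk, Sym2.eq_iff, Prod.mk.injEq] at hPx hPy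
    simp only [ne_eq, Prod.mk.injEq] at h1 h2 h3 ⊢
    grind

/-- An edge cut of a box product with fewer edges than either factor has vertices contains at
least as many edges as one of the two separated vertices has neighbours. -/
lemma CutsBetween.card_le_or_card_le {α β : Type*} [Fintype α] [Fintype β] {G : SimpleGraph α}
    {H : SimpleGraph β} (hG : G.Preconnected) (hH : H.Preconnected) {u v : α × β}
    {F : Finset (Sym2 (α × β))} (hF : CutsBetween (G □ H) u v F)
    (hα : F.card < Fintype.card α) (hβ : F.card < Fintype.card β) {M N : Finset (α × β)}
    (hM : ∀ x ∈ M, (G □ H).Adj u x) (hN : ∀ x ∈ N, (G □ H).Adj v x) :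
    M.card ≤ F.card ∨ N.card ≤ F.card := by
  by_contra! h
  obtain ⟨a, ha⟩ := exists_fiber_disjoint Prod.fst F hα
  obtain ⟨b, hb⟩ := exists_fiber_disjoint Prod.snd F hβ
  exact hF.2 ((reachable_of_card_lt hG hH hF.1 ha hb hM h.1).trans
    (reachable_of_card_lt hG hH hF.1 ha hb hN h.2).symm)

lemma CutsBetween.symm {V : Type*} {G : SimpleGraph V} {u v : V} {F : Finset (Sym2 V)}
    (h : CutsBetween G u v F) : CutsBetween G v u F :=
  ⟨h.1, fun h' => h.2 h'.symm⟩

/-- The edges at a vertex separate it from every other vertex. -/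
lemma cutsBetween_incidenceFinset {V : Type*} [DecidableEq V] {G : SimpleGraph V} {u v : V}
    [Fintype (G.neighborSet u)] (huv : u ≠ v) : CutsBetween G u v (G.incidenceFinset u) := by
  refine ⟨fun e he => ?_, ?_⟩
  · rw [Finset.mem_coe, mem_incidenceFinset] at he
    exact G.incidenceSet_subset u he
  · rintro ⟨p⟩
    cases p with
    | nil => exact huv rfl
    | cons h _ =>
      rw [deleteEdges_adj] at h
      exact h.2 (by simpa using h.1)

lemma lam_comm {V : Type*} (G : SimpleGraph V) (u v : V) : lam G u v = lam G v u := by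
  have : ∀ F, CutsBetween G u v F ↔ CutsBetween G v u F := fun F => ⟨.symm, .symm⟩
  simp only [lam, this]

lemma lam_eq_of_forall_le {V : Type*} {G : SimpleGraph V} {u v : V} {F : Finset (Sym2 V)}
    (hF : CutsBetween G u v F) (h : ∀ F', CutsBetween G u v F' → F.card ≤ F'.card) :
    F.card = lam G u v := by
  refine le_antisymm (le_csInf ⟨_, F, hF, rfl⟩ ?_) (Nat.sInf_le ⟨F, hF, rfl⟩)
  rintro _ ⟨F', hF', rfl⟩
  exact h F' hF'

/-- The edge colouring of the grid by direction and parity of position. -/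
def gridColor (m n : ℕ) : Sym2 (Fin m × Fin n) → ℕ :=
  Sym2.lift ⟨fun x y =>
    if (x.1.val + y.1.val) % 2 = 1 then (x.1.val + y.1.val) / 2 % 2
    else 2 + (x.2.val + y.2.val) / 2 % 2, fun x y => by
      simp only [add_comm]⟩

lemma gridColor_lt (m n : ℕ) (e : Sym2 (Fin m × Fin n)) : gridColor m n e < 4 := by
  induction e with
  | h x y =>
    simp only [gridColor, Sym2.lift_mk]
    split_ifs <;> omega

/-- `gridColor` is a proper edge colouring. -/
lemma gridColor_injOn_incidenceSet (m n : ℕ) (u : Fin m × Fin n) :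
    Set.InjOn (gridColor m n) ((pathGraph m □ pathGraph n).incidenceSet u) := by
  intro e he f hf hef
  obtain ⟨x, rfl⟩ := Sym2.mem_iff_exists.1 he.2
  obtain ⟨y, rfl⟩ := Sym2.mem_iff_exists.1 hf.2
  have hx := he.1
  have hy := hf.1
  simp only [mem_edgeSet, boxProd_adj, pathGraph_adj, Fin.ext_iff] at hx hy
  simp only [gridColor, Sym2.lift_mk] at hef
  suffices x.1.val = y.1.val ∧ x.2.val = y.2.val by
    rw [show x = y from Prod.ext (Fin.ext this.1) (Fin.ext this.2)]
  split_ifs at hef <;> omega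

/-- In a grid, the edges at a vertex of minimum degree form a rainbow minimum edge cut. -/
lemma exists_rainbow_cut_of_degree_le {m n : ℕ} (hm : 4 ≤ m) (hn : 4 ≤ n) {u v : Fin m × Fin n}
    [(pathGraph m □ pathGraph n).LocallyFinite] (huv : u ≠ v)
    (hdeg : (pathGraph m □ pathGraph n).degree u ≤ (pathGraph m □ pathGraph n).degree v) :
    ∃ F : Finset (Sym2 (Fin m × Fin n)), CutsBetween (pathGraph m □ pathGraph n) u v F ∧
      F.card = lam (pathGraph m □ pathGraph n) u v ∧ Set.InjOn (gridColor m n) ↑F := by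
  have hinj : Set.InjOn (gridColor m n) ((pathGraph m □ pathGraph n).incidenceFinset u) := by
    rw [coe_incidenceFinset]
    exact gridColor_injOn_incidenceSet m n u
  have hcut := cutsBetween_incidenceFinset (G := pathGraph m □ pathGraph n) huv
  refine ⟨_, hcut, lam_eq_of_forall_le hcut fun F hF => ?_, hinj⟩
  by_contra! hlt
  have h4 : ((pathGraph m □ pathGraph n).incidenceFinset u).card ≤ 4 := by
    rw [← Finset.card_range 4]
    exact Finset.card_le_card_of_injOn (gridColor m n)
      (fun e _ => by simpa using gridColor_lt m n e) hinj
  rw [card_incidenceFinset_eq_degree] at hlt h4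
  have := hF.card_le_or_card_le (pathGraph_preconnected m) (pathGraph_preconnected n)
    (by rw [Fintype.card_fin]; omega) (by rw [Fintype.card_fin]; omega)
    (M := (pathGraph m □ pathGraph n).neighborFinset u)
    (N := (pathGraph m □ pathGraph n).neighborFinset v) (by simp) (by simp)
  simp only [card_neighborFinset_eq_degree] at this
  omega

lemma isSRDColoring_gridColor {m n : ℕ} (hm : 4 ≤ m) (hn : 4 ≤ n) :
    IsSRDColoring (pathGraph m □ pathGraph n) (gridColor m n) := by
  have : (pathGraph m □ pathGraph n).LocallyFinite := fun _ => Fintype.ofFinite _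
  intro u v huv
  rcases le_total ((pathGraph m □ pathGraph n).degree u)
    ((pathGraph m □ pathGraph n).degree v) with h | h
  · exact exists_rainbow_cut_of_degree_le hm hn huv h
  · obtain ⟨F, hF, hcard, hinj⟩ := exists_rainbow_cut_of_degree_le hm hn huv.symm h
    exact ⟨F, hF.symm, hcard.trans (lam_comm _ v u), hinj⟩

/-- Some two vertices of the grid are not separated by fewer than four edges. -/
lemma exists_four_le_card_of_cutsBetween {m n : ℕ} (hm : 4 ≤ m) (hn : 4 ≤ n) :
    ∃ u v : Fin m × Fin n, u ≠ v ∧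
      ∀ F, CutsBetween (pathGraph m □ pathGraph n) u v F → 4 ≤ F.card := by
  obtain ⟨m, rfl⟩ := Nat.exists_eq_add_of_le' hm
  obtain ⟨n, rfl⟩ := Nat.exists_eq_add_of_le' hn
  let p (i j : ℕ) (hi : i < 4) (hj : j < 4) : Fin (m + 4) × Fin (n + 4) :=
    (⟨i, by omega⟩, ⟨j, by omega⟩)
  refine ⟨p 1 1 (by simp) (by simp), p 1 2 (by simp) (by simp), by simp [p], fun F hF => ?_⟩
  by_contra! hlt
  have := hF.card_le_or_card_le (pathGraph_preconnected _) (pathGraph_preconnected _)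
    (by rw [Fintype.card_fin]; omega) (by rw [Fintype.card_fin]; omega)
    (M := {p 0 1 (by simp) (by simp), p 2 1 (by simp) (by simp), p 1 0 (by simp) (by simp),
      p 1 2 (by simp) (by simp)})
    (N := {p 0 2 (by simp) (by simp), p 2 2 (by simp) (by simp), p 1 1 (by simp) (by simp),
      p 1 3 (by simp) (by simp)})
    (by simp [p, boxProd_adj, pathGraph_adj]) (by simp [p, boxProd_adj, pathGraph_adj])
  simp [p, Finset.card_insert_of_notMem] at this
  omega

theorem stmt13 (m n : ℕ) (hm : 4 ≤ m) (hmn : m ≤ n) :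
    srd (SimpleGraph.pathGraph m □ SimpleGraph.pathGraph n) = 4 := by
  have hn := hm.trans hmn
  have hmem : 4 ∈ {k | ∃ c : Sym2 (Fin m × Fin n) → ℕ,
      (∀ e ∈ (pathGraph m □ pathGraph n).edgeSet, c e < k) ∧
        IsSRDColoring (pathGraph m □ pathGraph n) c} :=
    ⟨gridColor m n, fun e _ => gridColor_lt m n e, isSRDColoring_gridColor hm hn⟩
  refine le_antisymm (Nat.sInf_le hmem) (le_csInf ⟨4, hmem⟩ ?_)
  rintro k ⟨c, hck, hc⟩
  obtain ⟨u, v, huv, h⟩ := exists_four_le_card_of_cutsBetween hm hn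
  obtain ⟨F, hF, -, hinj⟩ := hc u v huv
  calc 4 ≤ F.card := h F hF
    _ ≤ (Finset.range k).card :=
      Finset.card_le_card_of_injOn c (fun e he => by simpa using hck e (hF.1 he)) hinj
    _ = k := Finset.card_range k
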